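/- Let β = √((5+√17)/2). Then the 3×3 real matrix [[(β²−2)/(β²+1), β(β²−2)/√(2(β⁴−1)), −1/(β²+1)], [−√(β²−2)/(2√(β²+1)), √((β²−2)/(β⁴−1)), β(β²−2)/√(2(β⁴−1))], [−β²/(β²+1), √(β²−2)/(2√(β²+1)), −(β²−2)/(β²+1)]] is orthogonal (its rows form an orthonormal basis of ℝ³). -/

import Mathlib

/-!
Put `s = β²`, so `s² = 5s - 2`. This relation makes the nested radicals in `U` collapse:
`(s - 2)(s + 1) = 4(s - 1)` and `2(s² - 1)(s - 1) = s(s + 1)²`. Hence, with `r = √(s - 1)`, every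
entry of `(s + 1) U` is a polynomial in `s` and `r`, and orthogonality of `U` amounts to polynomial
identities modulo `s² = 5s - 2` and `r² = s - 1`.
-/

namespace AsaedaHaagerupStmt13

noncomputable def beta : ℝ := Real.sqrt ((5 + Real.sqrt 17) / 2)

noncomputable def U : Matrix (Fin 3) (Fin 3) ℝ :=
  !![(beta ^ 2 - 2) / (beta ^ 2 + 1),
       beta * (beta ^ 2 - 2) / Real.sqrt (2 * (beta ^ 4 - 1)),
       -(1 / (beta ^ 2 + 1));
     -(Real.sqrt (beta ^ 2 - 2) / (2 * Real.sqrt (beta ^ 2 + 1))),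
       Real.sqrt ((beta ^ 2 - 2) / (beta ^ 4 - 1)),
       beta * (beta ^ 2 - 2) / Real.sqrt (2 * (beta ^ 4 - 1));
     -(beta ^ 2 / (beta ^ 2 + 1)),
       Real.sqrt (beta ^ 2 - 2) / (2 * Real.sqrt (beta ^ 2 + 1)),
       -((beta ^ 2 - 2) / (beta ^ 2 + 1))]

open Matrix

theorem inv_smul_mem_orthogonalGroup {n K : Type*} [Fintype n] [DecidableEq n] [Field K]
    {A : Matrix n n K} {c : K} (hc : c ≠ 0) (hA : A * Aᵀ = c ^ 2 • (1 : Matrix n n K)) :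
    c⁻¹ • A ∈ orthogonalGroup n K := by
  rw [mem_orthogonalGroup_iff, transpose_smul, smul_mul_smul_comm, hA, smul_smul, ← mul_inv, ← sq,
    inv_mul_cancel₀ (pow_ne_zero 2 hc), one_smul]

/-- The matrix `(s + 1) U` with its denominators and nested radicals cleared, where `s` stands for
`β²` and `r` for `√(β² - 1)`. -/
def clearedU {R : Type*} [Ring R] (s r : R) : Matrix (Fin 3) (Fin 3) R :=
  !![s - 2, (s - 2) * r, -1;
     -r, 2, (s - 2) * r;
     -s, r, -(s - 2)]

theorem clearedU_mul_transpose {R : Type*} [CommRing R] {s r : R}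
    (hs : s ^ 2 = 5 * s - 2) (hr : r ^ 2 = s - 1) :
    clearedU s r * (clearedU s r)ᵀ = (s + 1) ^ 2 • (1 : Matrix (Fin 3) (Fin 3) R) := by
  have row₀_sq : (s - 2) ^ 2 + ((s - 2) * r) ^ 2 + 1 = (s + 1) ^ 2 := by
    linear_combination (s - 2) ^ 2 * hr + s * hs
  have row₁_sq : r ^ 2 + 2 ^ 2 + ((s - 2) * r) ^ 2 = (s + 1) ^ 2 := by
    linear_combination (1 + (s - 2) ^ 2) * hr + (s - 1) * hs
  have row₂_sq : s ^ 2 + r ^ 2 + (s - 2) ^ 2 = (s + 1) ^ 2 := by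
    linear_combination hr + hs
  have row₀_row₂ : -((s - 2) * s) + (s - 2) * r * r + (s - 2) = 0 := by
    linear_combination (s - 2) * hr
  have row₁_row₂ : r * s + 2 * r - (s - 2) * r * (s - 2) = 0 := by
    linear_combination -r * hs
  ext i j
  fin_cases i <;> fin_cases j <;>
    simp only [clearedU, Matrix.mul_apply, transpose_apply, Matrix.smul_apply, smul_eq_mul,
      Fin.sum_univ_three, of_apply, cons_val, Fin.zero_eta, Fin.mk_one, Fin.reduceFinMk,
      one_apply, Fin.reduceEq, if_true, if_false]
  · linear_combination row₀_sq
  · ring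
  · linear_combination row₀_row₂
  · ring
  · linear_combination row₁_sq
  · linear_combination row₁_row₂
  · linear_combination row₀_row₂
  · linear_combination row₁_row₂
  · linear_combination row₂_sq

section Radicals

variable {b : ℝ}

theorem sqrt_div_eq (hb : b ^ 4 = 5 * b ^ 2 - 2) :
    √((b ^ 2 - 2) / (b ^ 4 - 1)) = 2 / (b ^ 2 + 1) := by
  have hden : b ^ 4 - 1 ≠ 0 := by grind
  have hsq : (b ^ 2 - 2) / (b ^ 4 - 1) = (2 / (b ^ 2 + 1)) ^ 2 := by
    rw [div_pow, div_eq_div_iff hden (by positivity)]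
    linear_combination (b ^ 2 + 1) * hb
  rw [hsq, Real.sqrt_sq (by positivity)]

theorem sqrt_div_two_mul_sqrt_eq (hb : b ^ 4 = 5 * b ^ 2 - 2) :
    √(b ^ 2 - 2) / (2 * √(b ^ 2 + 1)) = √(b ^ 2 - 1) / (b ^ 2 + 1) := by
  have hpos : 0 < b ^ 2 + 1 := by positivity
  have hprod : √(b ^ 2 - 2) * √(b ^ 2 + 1) = 2 * √(b ^ 2 - 1) := by
    rw [← Real.sqrt_mul' _ hpos.le,
      show (b ^ 2 - 2) * (b ^ 2 + 1) = 2 ^ 2 * (b ^ 2 - 1) by linear_combination hb,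
      Real.sqrt_mul (by positivity), Real.sqrt_sq zero_le_two]
  rw [div_eq_div_iff (by positivity) hpos.ne']
  linear_combination √(b ^ 2 + 1) * hprod - √(b ^ 2 - 2) * Real.sq_sqrt hpos.le

theorem mul_div_sqrt_eq (hb : b ^ 4 = 5 * b ^ 2 - 2) (hb₀ : 0 ≤ b) (hb₁ : 1 < b ^ 2) :
    b * (b ^ 2 - 2) / √(2 * (b ^ 4 - 1)) = (b ^ 2 - 2) * √(b ^ 2 - 1) / (b ^ 2 + 1) := by
  have hden : 0 < 2 * (b ^ 4 - 1) := by linarith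
  have hprod : √(2 * (b ^ 4 - 1)) * √(b ^ 2 - 1) = b * (b ^ 2 + 1) := by
    rw [← Real.sqrt_mul hden.le,
      show 2 * (b ^ 4 - 1) * (b ^ 2 - 1) = (b * (b ^ 2 + 1)) ^ 2 by
        linear_combination (b ^ 2 + 1) * hb,
      Real.sqrt_sq (by positivity)]
  rw [div_eq_div_iff (Real.sqrt_pos.mpr hden).ne' (by positivity)]
  linear_combination -(b ^ 2 - 2) * hprod

end Radicals

theorem beta_sq : beta ^ 2 = (5 + √17) / 2 :=
  Real.sq_sqrt (by positivity)

theorem beta_pow_four : beta ^ 4 = 5 * beta ^ 2 - 2 := by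
  have h17 : √17 ^ 2 = (17 : ℝ) := Real.sq_sqrt (by norm_num)
  rw [show beta ^ 4 = (beta ^ 2) ^ 2 by ring, beta_sq]
  linear_combination h17 / 4

theorem one_lt_beta_sq : 1 < beta ^ 2 := by
  rw [beta_sq]
  linarith [Real.sqrt_nonneg 17]

theorem U_eq_inv_smul_clearedU :
    U = (beta ^ 2 + 1)⁻¹ • clearedU (beta ^ 2) √(beta ^ 2 - 1) := by
  rw [U, sqrt_div_eq beta_pow_four, sqrt_div_two_mul_sqrt_eq beta_pow_four,
    mul_div_sqrt_eq beta_pow_four (Real.sqrt_nonneg _) one_lt_beta_sq]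
  simp [clearedU, div_eq_inv_mul, -neg_sub]

theorem asaeda_haagerup_stmt13 : U ∈ Matrix.orthogonalGroup (Fin 3) ℝ := by
  have hs : (beta ^ 2) ^ 2 = 5 * beta ^ 2 - 2 := by rw [← pow_mul, beta_pow_four]
  have hr : √(beta ^ 2 - 1) ^ 2 = beta ^ 2 - 1 := Real.sq_sqrt (sub_nonneg.mpr one_lt_beta_sq.le)
  rw [U_eq_inv_smul_clearedU]
  exact inv_smul_mem_orthogonalGroup (by positivity) (clearedU_mul_transpose hs hr)

end AsaedaHaagerupStmt13
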